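/- Let X be a complex Banach space, T a bounded linear operator on X, and β an ordinal. Then 0 ∉ acc^{β+1} σ(T) if and only if there exists a bounded linear operator P on X with P² = P, PT = TP, 0 ∉ acc^β σ(T + P), and acc^β σ(TP) ⊆ {0}. -/

import Mathlib

open Ordinal Set

/-- The `α`-th Cantor–Bendixson derivative of a set `A ⊆ ℂ`, defined by transfinite
recursion: `cbd A 0 = A`, `cbd A (β+1) = derivedSet (cbd A β)` (the set of accumulation
points of `cbd A β`), and `cbd A α = ⋂_{β < α} cbd A β` for limit ordinals `α`. -/
noncomputable def cbd (A : Set ℂ) (α : Ordinal) : Set ℂ :=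
  Ordinal.limitRecOn α A (fun _ ih => derivedSet ih)
    (fun α _ ih => ⋂ (β : Set.Iio α), ih β.1 β.2)

variable {X : Type*} [NormedAddCommGroup X] [NormedSpace ℂ X] [CompleteSpace X]

/-- The restriction `T_M` of a bounded operator `T` to a `T`-invariant subspace `M`. -/
noncomputable def restr (T : X →L[ℂ] X) (M : Submodule ℂ X)
    (hM : ∀ x ∈ M, T x ∈ M) : M →L[ℂ] M :=
  { toLinearMap := T.toLinearMap.restrict hM
    cont := (T.continuous.comp continuous_subtype_val).subtype_mk _ }

section helpers

lemma cbd_zero (A : Set ℂ) : cbd A 0 = A := by simp [cbd]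
lemma cbd_succ (A : Set ℂ) (α : Ordinal) : cbd A (α + 1) = derivedSet (cbd A α) := by simp [cbd]
lemma mem_cbd_limit (A : Set ℂ) {α : Ordinal} (h : Order.IsSuccLimit α) (z : ℂ) :
    z ∈ cbd A α ↔ ∀ β < α, z ∈ cbd A β := by
  unfold cbd
  rw [limitRecOn_limit _ _ _ _ h]
  simp

lemma cbd_closed {A : Set ℂ} (hA : IsClosed A) (α : Ordinal) : IsClosed (cbd A α) := by
  induction α using Ordinal.limitRecOn with
  | zero => rwa [cbd_zero]
  | add_one a ih => rw [cbd_succ]; exact isClosed_derivedSet _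
  | limit a ha ih =>
    have : cbd A a = ⋂ b, ⋂ (_ : b < a), cbd A b := by
      ext z; simp [mem_cbd_limit A ha]
    rw [this]
    exact isClosed_iInter fun b => isClosed_iInter fun hb => ih b hb

lemma cbd_anti {A : Set ℂ} (hA : IsClosed A) (α : Ordinal) : ∀ β ≤ α, cbd A α ⊆ cbd A β := by
  induction α using Ordinal.limitRecOn with
  | zero => intro β h; rw [nonpos_iff_eq_zero.mp h]
  | add_one a ih =>
    intro β h
    rcases h.eq_or_lt with rfl | h
    · exact subset_rfl
    · rw [cbd_succ]
      exact ((isClosed_iff_derivedSet_subset _).1 (cbd_closed hA a)).trans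
        (ih β (Order.lt_add_one_iff.mp h))
  | limit a ha ih =>
    intro β h
    rcases h.eq_or_lt with rfl | h
    · exact subset_rfl
    · exact fun z hz => (mem_cbd_limit A ha z).1 hz β h

lemma cbd_subset {A : Set ℂ} (hA : IsClosed A) (α : Ordinal) : cbd A α ⊆ A := by
  have := cbd_anti hA α 0 (zero_le)
  rwa [cbd_zero] at this

lemma cbd_local {A B U : Set ℂ} (hU : IsOpen U) (h : A ∩ U ⊆ B) (α : Ordinal) :
    cbd A α ∩ U ⊆ cbd B α := by
  induction α using Ordinal.limitRecOn with
  | zero => rwa [cbd_zero, cbd_zero]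
  | add_one a ih =>
    rw [cbd_succ, cbd_succ]
    rintro z ⟨hz, hzU⟩
    rw [mem_derivedSet, accPt_iff_nhds] at hz ⊢
    intro V hV
    obtain ⟨y, hy, hne⟩ := hz (V ∩ U) (Filter.inter_mem hV (hU.mem_nhds hzU))
    exact ⟨y, ⟨hy.1.1, ih ⟨hy.2, hy.1.2⟩⟩, hne⟩
  | limit a ha ih =>
    rintro z ⟨hz, hzU⟩
    rw [mem_cbd_limit _ ha] at hz ⊢
    exact fun b hb => ih b hb ⟨hz b hb, hzU⟩

lemma cbd_union {A B : Set ℂ} (hA : IsClosed A) (hB : IsClosed B) (α : Ordinal) :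
    cbd (A ∪ B) α ⊆ cbd A α ∪ cbd B α := by
  induction α using Ordinal.limitRecOn with
  | zero => simp [cbd_zero]
  | add_one a ih =>
    rw [cbd_succ, cbd_succ, cbd_succ, ← derivedSet_union]
    exact derivedSet_mono _ _ ih
  | limit a ha ih =>
    intro z hz
    by_contra hcon
    rw [mem_union, not_or, mem_cbd_limit _ ha, mem_cbd_limit _ ha] at hcon
    push Not at hcon
    obtain ⟨⟨b, hb, hzb⟩, c, hc, hzc⟩ := hcon
    rw [mem_cbd_limit _ ha] at hz
    have hm : max b c < a := max_lt hb hc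
    rcases ih _ hm (hz _ hm) with h | h
    · exact hzb (cbd_anti hA _ _ (le_max_left _ _) h)
    · exact hzc (cbd_anti hB _ _ (le_max_right _ _) h)

lemma perfect_subset_cbd {A D : Set ℂ} (hD : Perfect D) (h : D ⊆ A) (α : Ordinal) :
    D ⊆ cbd A α := by
  induction α using Ordinal.limitRecOn with
  | zero => rwa [cbd_zero]
  | add_one a ih =>
    rw [cbd_succ]
    exact (preperfect_iff_subset_derivedSet.1 hD.acc).trans (derivedSet_mono _ _ ih)
  | limit a ha ih =>
    intro z hz
    rw [mem_cbd_limit _ ha]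
    exact fun b hb => ih b hb hz

lemma diff_cbd_countable {A : Set ℂ} (hA : IsClosed A) (α : Ordinal) :
    (A \ cbd A α).Countable := by
  obtain ⟨V, D, hV, hD, rfl⟩ := exists_countable_union_perfect_of_isClosed hA
  refine hV.mono ?_
  rintro z ⟨hz | hz, h2⟩
  · exact hz
  · exact absurd (perfect_subset_cbd hD subset_union_right α hz) h2

/-- A circle of small radius missing `A`. -/
lemma exists_radius {A : Set ℂ} (hA : IsClosed A) (α : Ordinal)
    (h0 : (0 : ℂ) ∉ cbd A (α + 1)) :
    ∃ r : ℝ, 0 < r ∧ r < 1 ∧ (∀ z ∈ A, ‖z‖ ≠ r) ∧ ∀ z ∈ cbd A α, ‖z‖ ≤ r → z = 0 := by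
  rw [cbd_succ, mem_derivedSet, accPt_iff_nhds] at h0
  push Not at h0
  obtain ⟨U, hU, h⟩ := h0
  obtain ⟨ε, hε, hball⟩ := Metric.mem_nhds_iff.1 hU
  have hc : ((fun z : ℂ => ‖z‖) '' (A \ cbd A α)).Countable := (diff_cbd_countable hA α).image _
  have hlt : (0 : ℝ) < min ε 1 := lt_min hε one_pos
  have hnot : ¬ (Ioo (0 : ℝ) (min ε 1) ⊆ (fun z : ℂ => ‖z‖) '' (A \ cbd A α)) := by
    intro hs
    exact (Cardinal.Real.Ioo_countable_iff.not.2 (not_le.2 hlt)) (hc.mono hs)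
  obtain ⟨r, hr, hrn⟩ := not_subset.1 hnot
  have key : ∀ z ∈ cbd A α, ‖z‖ ≤ r → z = 0 := by
    intro z hz hzr
    refine h z ⟨hball ?_, hz⟩
    simpa using hzr.trans_lt (hr.2.trans_le (min_le_left _ _))
  refine ⟨r, hr.1, hr.2.trans_le (min_le_right _ _), ?_, key⟩
  intro z hz hzr
  by_cases hzc : z ∈ cbd A α
  · have := key z hzc hzr.le
    subst this
    simp at hzr
    exact hr.1.ne hzr
  · exact hrn ⟨z, ⟨hz, hzc⟩, hzr⟩

variable {A : Type*} [Ring A] [Algebra ℂ A]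

lemma not_mem_spec_of_inv {a b : A} {w : ℂ} (h1 : (algebraMap ℂ A w - a) * b = 1)
    (h2 : b * (algebraMap ℂ A w - a) = 1) : w ∉ spectrum ℂ a := by
  rw [spectrum.notMem_iff]
  exact ⟨⟨_, b, h1, h2⟩, rfl⟩

lemma exists_inv_of_not_mem {a : A} {w : ℂ} (h : w ∉ spectrum ℂ a) :
    ∃ b : A, (algebraMap ℂ A w - a) * b = 1 ∧ ∀ c, Commute c a → Commute c b := by
  rw [spectrum.notMem_iff] at h
  obtain ⟨u, hu⟩ := h
  refine ⟨(u⁻¹ : Aˣ), by rw [← hu]; simp, fun c hc => ?_⟩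
  refine Commute.units_inv_right ?_
  rw [hu]
  exact (Algebra.commute_algebraMap_right w c).sub_right hc

/-- general pasting lemma -/
lemma paste {a p u v b : A} {w : ℂ} (hp : p * p = p) (hb : Commute p b)
    (hpu : Commute p u) (hpv : Commute p v) (hbu : Commute b u) (hbv : Commute b v)
    (h1 : (algebraMap ℂ A w - b) * u * p = p)
    (h2 : (algebraMap ℂ A w - b) * v * (1 - p) = 1 - p) 
    (ha : a = b) : w ∉ spectrum ℂ a := by
  subst ha
  have hw : ∀ c, Commute (algebraMap ℂ A w) c := fun c => Algebra.commute_algebraMap_left w c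
  have e : (algebraMap ℂ A w - a) * (u * p + v * (1 - p)) = 1 := by
    rw [mul_add, ← mul_assoc, ← mul_assoc, h1, h2]; abel
  refine not_mem_spec_of_inv e ?_
  refine Eq.trans (Eq.symm ?_) e
  have c1 : ∀ c, Commute a c → Commute (algebraMap ℂ A w - a) c := fun c h => (hw c).sub_left h
  exact c1 _ ((hbu.mul_right hb.symm).add_right
    (hbv.mul_right ((Commute.one_right _).sub_right hb.symm)))

/-- converse direction -/
lemma spec_converse {T P : A} (hP : P * P = P) (hc : Commute P T) :
    spectrum ℂ T ∩ {0}ᶜ ⊆ spectrum ℂ (T * P) ∪ spectrum ℂ (T + P) := by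
  rintro w ⟨hw, hw0⟩
  by_contra hcon
  rw [mem_union, not_or] at hcon
  obtain ⟨u, hu, hu'⟩ := exists_inv_of_not_mem hcon.1
  obtain ⟨v, hv, hv'⟩ := exists_inv_of_not_mem hcon.2
  have cTu : Commute T u := hu' T ((Commute.refl T).mul_right hc.symm)
  have cPu : Commute P u := hu' P (hc.mul_right (Commute.refl P))
  have cTv : Commute T v := hv' T ((Commute.refl T).add_right hc.symm)
  have cPv : Commute P v := hv' P (hc.add_right (Commute.refl P))
  refine paste hP hc cPu cPv cTu cTv ?_ ?_ rfl hw
  · have : (algebraMap ℂ A w - T) * u * P = ((algebraMap ℂ A w - T * P) * u) * P := by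
      rw [mul_assoc, mul_assoc, ← cPu.eq, ← mul_assoc, ← mul_assoc]
      congr 1
      rw [sub_mul, sub_mul, mul_assoc T, hP]
    rw [this, hu, one_mul]
  · have : (algebraMap ℂ A w - T) * v * (1 - P) = ((algebraMap ℂ A w - (T + P)) * v) * (1 - P) := by
      have c : v * (1 - P) = (1 - P) * v := ((Commute.one_left v).sub_left cPv).eq.symm
      rw [mul_assoc, mul_assoc, c, ← mul_assoc, ← mul_assoc]
      congr 1
      rw [← _root_.sub_sub, sub_mul _ P, _root_.mul_sub P, hP]; simp
    rw [this, hv, one_mul]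

lemma spec_TP_subset {T P : A} (hP : P * P = P) (hc : Commute P T) {w : ℂ} (hw0 : w ≠ 0)
    {S : A} (hS : (algebraMap ℂ A w - T) * S * P = P) (cPS : Commute P S) (cTS : Commute T S) :
    w ∉ spectrum ℂ (T * P) := by
  refine paste (v := algebraMap ℂ A w⁻¹) hP (hc.mul_right (Commute.refl P)) cPS
    (Algebra.commute_algebraMap_right _ _) (cTS.mul_left cPS)
    (Algebra.commute_algebraMap_right _ _) ?_ ?_ rfl
  · have : (algebraMap ℂ A w - T * P) * S * P = (algebraMap ℂ A w - T) * S * P := by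
      rw [mul_assoc, mul_assoc, ← cPS.eq, ← mul_assoc, ← mul_assoc]
      congr 1
      rw [sub_mul, sub_mul, mul_assoc T, hP]
    rw [this, hS]
  · rw [mul_assoc, (Algebra.commute_algebraMap_left _ _ : Commute (algebraMap ℂ A w⁻¹) (1 - P)).eq,
      ← mul_assoc, sub_mul, mul_assoc T P, _root_.mul_sub P, hP]
    simp only [mul_one, _root_.sub_self, mul_zero, _root_.sub_zero]
    rw [(Algebra.commute_algebraMap_left w (1 - P)).eq, mul_assoc, ← map_mul, mul_inv_cancel₀ hw0]
    simp

lemma spec_TaddP {T P : A} (hP : P * P = P) (hc : Commute P T)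
    {S S' : A} (hS : (algebraMap ℂ A (-1) - T) * S * P = P) (cPS : Commute P S) (cTS : Commute T S)
    (hS' : (algebraMap ℂ A 0 - T) * S' * (1 - P) = 1 - P) (cPS' : Commute P S')
    (cTS' : Commute T S') :
    (0 : ℂ) ∉ spectrum ℂ (T + P) := by
  refine paste hP (hc.add_right (Commute.refl P)) cPS cPS' (cTS.add_left cPS)
    (cTS'.add_left cPS') ?_ ?_ rfl
  · rw [mul_assoc, ← cPS.eq, ← mul_assoc] at hS ⊢
    refine Eq.trans ?_ hS
    congr 1
    rw [map_neg, map_one, map_zero, sub_mul, sub_mul, add_mul, hP]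
    noncomm_ring
  · have c : S' * (1 - P) = (1 - P) * S' := ((Commute.one_left S').sub_left cPS').eq.symm
    rw [mul_assoc, c, ← mul_assoc] at hS' ⊢
    refine Eq.trans ?_ hS'
    congr 1
    rw [← _root_.sub_sub, sub_mul _ P, _root_.mul_sub P, hP]; simp

end helpers
section riesz

open MeasureTheory

variable {A : Type*} [NormedRing A] [NormedAlgebra ℂ A] [CompleteSpace A]

lemma clm_circleIntegral (L : A →L[ℂ] A) {f : ℂ → A} {r : ℝ} (hf : CircleIntegrable f 0 r) :
    (∮ z in C(0, r), L (f z)) = L (∮ z in C(0, r), f z) := by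
  unfold circleIntegral
  rw [← L.intervalIntegral_comp_comm hf.out]
  simp

lemma mul_circleIntegral (a : A) {f : ℂ → A} {r : ℝ} (hf : CircleIntegrable f 0 r) :
    (∮ z in C(0, r), a * f z) = a * (∮ z in C(0, r), f z) :=
  clm_circleIntegral (ContinuousLinearMap.mul ℂ A a) hf

lemma circleIntegral_mul (a : A) {f : ℂ → A} {r : ℝ} (hf : CircleIntegrable f 0 r) :
    (∮ z in C(0, r), f z * a) = (∮ z in C(0, r), f z) * a :=
  clm_circleIntegral ((ContinuousLinearMap.mul ℂ A).flip a) hf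

lemma commute_circleIntegral {a : A} {f : ℂ → A} {r : ℝ} (hr : 0 ≤ r)
    (hf : CircleIntegrable f 0 r) (h : ∀ z ∈ Metric.sphere (0 : ℂ) r, Commute a (f z)) :
    Commute a (∮ z in C(0, r), f z) := by
  unfold Commute SemiconjBy
  rw [← mul_circleIntegral a hf, ← circleIntegral_mul a hf]
  exact circleIntegral.integral_congr hr fun z hz => h z hz

lemma circleIntegral_swap {f : ℂ → ℂ → A} {r s : ℝ}
    (hf : Continuous fun p : ℝ × ℝ => f (circleMap 0 s p.1) (circleMap 0 r p.2)) :
    (∮ w in C(0, s), ∮ z in C(0, r), f w z) = ∮ z in C(0, r), ∮ w in C(0, s), f w z := by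
  unfold circleIntegral
  simp only [← intervalIntegral.integral_smul]
  rw [intervalIntegral_intervalIntegral_swap]
  · simp only [smul_comm (deriv (circleMap 0 s) _)]
  · have hc : Continuous (Function.uncurry fun x y : ℝ => deriv (circleMap 0 s) x •
        deriv (circleMap 0 r) y • f (circleMap 0 s x) (circleMap 0 r y)) := by
      simp only [deriv_circleMap]
      unfold Function.uncurry
      refine Continuous.smul (by fun_prop) (Continuous.smul (by fun_prop) hf)
    refine (hc.continuousOn.integrableOn_compact
      (isCompact_uIcc.prod isCompact_uIcc)).mono_set
      (prod_mono uIoc_subset_uIcc uIoc_subset_uIcc)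

lemma continuousOn_resolvent (T : A) : ContinuousOn (resolvent T : ℂ → A) (resolventSet ℂ T) :=
  fun z hz => (spectrum.hasDerivAt_resolvent_const_left hz).continuousAt.continuousWithinAt

lemma resolvent_mul_eq {T : A} {z : ℂ} (hz : z ∉ spectrum ℂ T) :
    resolvent T z * (algebraMap ℂ A z - T) = 1 :=
  Ring.inverse_mul_cancel _ (spectrum.notMem_iff.1 hz)

lemma mul_resolvent_eq {T : A} {z : ℂ} (hz : z ∉ spectrum ℂ T) :
    (algebraMap ℂ A z - T) * resolvent T z = 1 :=
  Ring.mul_inverse_cancel _ (spectrum.notMem_iff.1 hz)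

lemma commute_resolvent {T a : A} (h : Commute a T) (z : ℂ) : Commute a (resolvent T z) := by
  have hc : Commute a (algebraMap ℂ A z - T) :=
    (Algebra.commute_algebraMap_right z a).sub_right h
  unfold resolvent
  by_cases hu : IsUnit (algebraMap ℂ A z - T)
  · obtain ⟨u, hu⟩ := hu
    rw [← hu] at hc ⊢
    rw [Ring.inverse_unit]
    exact hc.units_inv_right
  · rw [Ring.inverse_non_unit _ hu]
    exact Commute.zero_right a

lemma integral_inv_out {r : ℝ} (hr : 0 < r) {w : ℂ} (hw : r < ‖w‖) :
    (∮ z in C(0, r), (z - w)⁻¹) = 0 := by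
  have hne : ∀ z ∈ Metric.closedBall (0 : ℂ) r, z - w ≠ 0 := by
    intro z hz h
    rw [sub_eq_zero] at h
    subst h
    simp at hz
    linarith
  refine Complex.circleIntegral_eq_zero_of_differentiable_on_off_countable hr.le
    countable_empty ?_ ?_
  · exact ContinuousOn.inv₀ (by fun_prop) hne
  · intro z hz
    exact DifferentiableAt.inv (by fun_prop) (hne z (Metric.ball_subset_closedBall hz.1))

lemma integral_inv_in {r : ℝ} {w : ℂ} (hw : ‖w‖ < r) :
    (∮ z in C(0, r), (z - w)⁻¹) = 2 * Real.pi * Complex.I :=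
  circleIntegral.integral_sub_inv_of_mem_ball (by simpa using hw)

/-- Cauchy transform of the resolvent (unnormalised). -/
noncomputable def rieszS (T : A) (r : ℝ) (w : ℂ) : A :=
  ∮ z in C(0, r), (z - w)⁻¹ • resolvent T z

/-- unnormalised Riesz projection. -/
noncomputable def rieszI (T : A) (r : ℝ) : A := ∮ z in C(0, r), resolvent T z

variable {T : A} {r : ℝ} 

lemma rieszI_integrable (hr : 0 < r) (h : ∀ z ∈ spectrum ℂ T, ‖z‖ ≠ r) :
    CircleIntegrable (resolvent T) 0 r := by
  refine ContinuousOn.circleIntegrable hr.le ((continuousOn_resolvent T).mono ?_)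
  intro z hz
  by_contra hc
  exact h z hc (by simpa using hz)

lemma sub_ne_zero_sphere {w z : ℂ} (hw : ‖w‖ ≠ r) (hz : z ∈ Metric.sphere (0 : ℂ) r) :
    z - w ≠ 0 := by
  intro h
  rw [sub_eq_zero] at h
  subst h
  exact hw (by simpa using hz)

lemma rieszS_integrable (hr : 0 < r) (h : ∀ z ∈ spectrum ℂ T, ‖z‖ ≠ r) {w : ℂ}
    (hw : ‖w‖ ≠ r) :
    CircleIntegrable (fun z => (z - w)⁻¹ • resolvent T z) 0 r := by
  refine ContinuousOn.circleIntegrable hr.le (ContinuousOn.smul ?_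
    ((continuousOn_resolvent T).mono ?_))
  · exact ContinuousOn.inv₀ (by fun_prop) fun z hz => sub_ne_zero_sphere hw hz
  · intro z hz
    by_contra hc
    exact h z hc (by simpa using hz)

lemma rieszS_eq (hr : 0 < r) (h : ∀ z ∈ spectrum ℂ T, ‖z‖ ≠ r) {w : ℂ} (hw : ‖w‖ ≠ r) :
    (algebraMap ℂ A w - T) * rieszS T r w =
      (∮ z in C(0, r), (z - w)⁻¹) • (1 : A) - rieszI T r := by
  unfold rieszS rieszI
  rw [← mul_circleIntegral _ (rieszS_integrable hr h hw),
    ← circleIntegral.integral_smul_const, ← circleIntegral.integral_sub _ (rieszI_integrable hr h)]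
  · refine circleIntegral.integral_congr hr.le fun z hz => ?_
    have hne := sub_ne_zero_sphere hw hz
    have hzs : z ∉ spectrum ℂ T := fun hc => h z hc (by simpa using hz)
    have e : algebraMap ℂ A w - T = (algebraMap ℂ A z - T) - (z - w) • (1 : A) := by
      rw [sub_smul, ← Algebra.algebraMap_eq_smul_one, ← Algebra.algebraMap_eq_smul_one]
      abel
    rw [mul_smul_comm, e, sub_mul, mul_resolvent_eq hzs, smul_sub, smul_mul_assoc, one_mul,
      inv_smul_smul₀ hne]
  · refine ContinuousOn.circleIntegrable hr.le (ContinuousOn.smul ?_ continuousOn_const)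
    exact ContinuousOn.inv₀ (by fun_prop) fun z hz => sub_ne_zero_sphere hw hz

lemma commute_rieszI (hr : 0 < r) (h : ∀ z ∈ spectrum ℂ T, ‖z‖ ≠ r) {a : A} (ha : Commute a T) :
    Commute a (rieszI T r) :=
  commute_circleIntegral hr.le (rieszI_integrable hr h) fun z _ => commute_resolvent ha z

lemma commute_rieszS (hr : 0 < r) (h : ∀ z ∈ spectrum ℂ T, ‖z‖ ≠ r) {w : ℂ} (hw : ‖w‖ ≠ r)
    {a : A} (ha : Commute a T) :
    Commute a (rieszS T r w) :=
  commute_circleIntegral hr.le (rieszS_integrable hr h hw) fun z _ =>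
    (commute_resolvent ha z).smul_right _

lemma rieszI_annulus {s : ℝ} (hr : 0 < r) (hrs : r ≤ s)
    (h : ∀ z ∈ spectrum ℂ T, ‖z‖ ∉ Icc r s) : rieszI T s = rieszI T r := by
  have hm : ∀ z : ℂ, r ≤ ‖z‖ → ‖z‖ ≤ s → z ∈ resolventSet ℂ T := by
    intro z h1 h2
    by_contra hc
    exact h z hc ⟨h1, h2⟩
  refine Complex.circleIntegral_eq_of_differentiable_on_annulus_off_countable hr hrs
    countable_empty ?_ ?_
  · refine (continuousOn_resolvent T).mono ?_
    rintro z ⟨h1, h2⟩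
    simp at h1 h2
    exact hm z h2 h1
  · rintro z ⟨⟨h1, h2⟩, -⟩
    simp at h1 h2
    exact (spectrum.hasDerivAt_resolvent_const_left (hm z h2.le h1.le)).differentiableAt

lemma rieszI_sq {s : ℝ} (hr : 0 < r) (hrs : r < s)
    (h : ∀ z ∈ spectrum ℂ T, ‖z‖ ∉ Icc r s) :
    rieszI T r * rieszI T r = (2 * Real.pi * Complex.I : ℂ) • rieszI T r := by
  have hs : 0 < s := hr.trans hrs
  have h1 : ∀ z ∈ spectrum ℂ T, ‖z‖ ≠ r := fun z hz e => h z hz ⟨e.ge, e.le.trans hrs.le⟩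
  have h2 : ∀ z ∈ spectrum ℂ T, ‖z‖ ≠ s := fun z hz e => h z hz ⟨hrs.le.trans e.ge, e.le⟩
  nth_rewrite 1 [← rieszI_annulus hr hrs.le h]
  have key : rieszI T s * rieszI T r
      = ∮ w in C(0, s), ∮ z in C(0, r), (w - z)⁻¹ • resolvent T z := by
    rw [rieszI, ← circleIntegral_mul _ (rieszI_integrable hs h2)]
    refine circleIntegral.integral_congr hs.le fun w hw => ?_
    have hws : w ∉ spectrum ℂ T := fun hc => h2 w hc (by simpa using hw)
    have hwn : ‖w‖ = s := by simpa using hw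
    have e := rieszS_eq hr h1 (w := w) (by rw [hwn]; exact hrs.ne')
    rw [integral_inv_out hr (by rw [hwn]; exact hrs), zero_smul, _root_.zero_sub] at e
    have e2 : rieszI T r = - ((algebraMap ℂ A w - T) * rieszS T r w) := by rw [e, neg_neg]
    rw [e2, mul_neg, ← mul_assoc, resolvent_mul_eq hws, one_mul, rieszS, ← neg_one_smul ℂ,
      ← circleIntegral.integral_smul]
    refine circleIntegral.integral_congr hr.le fun z hz => ?_
    rw [neg_one_smul, ← neg_smul, ← inv_neg, neg_sub]
  rw [key, circleIntegral_swap]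
  · unfold rieszI
    rw [← circleIntegral.integral_smul]
    refine circleIntegral.integral_congr hr.le fun z hz => ?_
    have hzn : ‖z‖ = r := by simpa using hz
    rw [circleIntegral.integral_smul_const, integral_inv_in (by rw [hzn]; exact hrs)]
  · refine Continuous.smul (Continuous.inv₀ (by fun_prop) ?_) ?_
    · rintro ⟨x, y⟩ hxy
      rw [sub_eq_zero] at hxy
      have := congrArg norm hxy
      simp [abs_of_pos hr, abs_of_pos hs] at this
      exact hrs.ne' this
    · refine (continuousOn_resolvent T).comp_continuous (by fun_prop) ?_
      rintro ⟨x, y⟩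
      by_contra hc
      refine h1 _ hc ?_
      simp [abs_of_pos hr]

lemma exists_outer (h : ∀ z ∈ spectrum ℂ T, ‖z‖ ≠ r) :
    ∃ s, r < s ∧ ∀ z ∈ spectrum ℂ T, ‖z‖ ∉ Icc r s := by
  have hK : IsCompact ((fun z : ℂ => ‖z‖) '' spectrum ℂ T) :=
    (spectrum.isCompact T).image continuous_norm
  have hm : ((fun z : ℂ => ‖z‖) '' spectrum ℂ T)ᶜ ∈ nhds r :=
    hK.isClosed.isOpen_compl.mem_nhds (by rintro ⟨z, hz, e⟩; exact h z hz e)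
  obtain ⟨ε, hε, hb⟩ := Metric.mem_nhds_iff.1 hm
  refine ⟨r + ε / 2, by linarith, fun z hz hI => ?_⟩
  refine hb (a := ‖z‖) ?_ ⟨z, hz, rfl⟩
  rw [Metric.mem_ball, Real.dist_eq, abs_lt]
  constructor <;> linarith [hI.1, hI.2]

/-- The Riesz projection and its properties. -/
lemma exists_riesz (hr : 0 < r) (h : ∀ z ∈ spectrum ℂ T, ‖z‖ ≠ r) :
    ∃ P : A, P * P = P ∧ Commute P T ∧
      (∀ w : ℂ, r < ‖w‖ → ∃ S, (algebraMap ℂ A w - T) * S * P = P ∧ Commute P S ∧ Commute T S) ∧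
      (∀ w : ℂ, ‖w‖ < r → ∃ S, (algebraMap ℂ A w - T) * S * (1 - P) = 1 - P ∧
        Commute P S ∧ Commute T S) := by
  obtain ⟨s, hrs, hs⟩ := exists_outer h
  have hpi : (2 * Real.pi * Complex.I : ℂ) ≠ 0 := Complex.two_pi_I_ne_zero
  have hcI : Commute T (rieszI T r) := commute_rieszI hr h (Commute.refl T)
  have hc : Commute ((2 * Real.pi * Complex.I : ℂ)⁻¹ • rieszI T r) T := (hcI.smul_right _).symm
  have hP : ((2 * Real.pi * Complex.I : ℂ)⁻¹ • rieszI T r) *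
      ((2 * Real.pi * Complex.I : ℂ)⁻¹ • rieszI T r)
      = (2 * Real.pi * Complex.I : ℂ)⁻¹ • rieszI T r := by
    rw [smul_mul_smul_comm, rieszI_sq hr hrs hs, smul_smul, mul_assoc, inv_mul_cancel₀ hpi, mul_one]
  refine ⟨(2 * Real.pi * Complex.I : ℂ)⁻¹ • rieszI T r, hP, hc, ?_, ?_⟩
  · intro w hw
    refine ⟨(-(2 * Real.pi * Complex.I : ℂ)⁻¹) • rieszS T r w, ?_,
      (commute_rieszS hr h hw.ne' hc).smul_right _,
      (commute_rieszS hr h hw.ne' (Commute.refl T)).smul_right _⟩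
    rw [mul_smul_comm _ (algebraMap ℂ A w - T), rieszS_eq hr h hw.ne', integral_inv_out hr hw, zero_smul, _root_.zero_sub,
      smul_neg, neg_smul, neg_neg, hP]
  · intro w hw
    refine ⟨((2 * Real.pi * Complex.I : ℂ)⁻¹) • rieszS T r w, ?_,
      (commute_rieszS hr h hw.ne hc).smul_right _,
      (commute_rieszS hr h hw.ne (Commute.refl T)).smul_right _⟩
    rw [mul_smul_comm _ (algebraMap ℂ A w - T), rieszS_eq hr h hw.ne, integral_inv_in hw, smul_sub, inv_smul_smul₀ hpi]
    generalize ((2 * Real.pi * Complex.I : ℂ)⁻¹ • rieszI T r) = P at hP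
    rw [sub_mul, _root_.mul_sub P, hP]; simp

end riesz

/-- `0 ∉ acc^{β+1} σ(T)` iff there is a bounded projection `P` commuting with `T` such
that `0 ∉ acc^β σ(T + P)` and `acc^β σ(TP) ⊆ {0}`. -/
theorem not_mem_cbd_succ_iff_exists_projection (T : X →L[ℂ] X) (β : Ordinal) :
    (0 : ℂ) ∉ cbd (spectrum ℂ T) (β + 1) ↔
      ∃ P : X →L[ℂ] X, P * P = P ∧ P * T = T * P ∧
        (0 : ℂ) ∉ cbd (spectrum ℂ (T + P)) β ∧
        cbd (spectrum ℂ (T * P)) β ⊆ {0} := by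
  have hcl : ∀ S : X →L[ℂ] X, IsClosed (spectrum ℂ S) := fun S => spectrum.isClosed S
  constructor
  · intro h0
    obtain ⟨r, hr, hr1, hA, hk⟩ := exists_radius (hcl T) β h0
    obtain ⟨P, hP, hc, hout, hin⟩ := exists_riesz hr hA
    refine ⟨P, hP, hc, ?_, ?_⟩
    · obtain ⟨S, hS, c1, c2⟩ := hout (-1) (by simpa using hr1)
      obtain ⟨S', hS', c1', c2'⟩ := hin 0 (by simpa using hr)
      exact fun hmem => spec_TaddP hP hc hS c1 c2 hS' c1' c2' (cbd_subset (hcl _) β hmem)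
    · intro z hz
      by_contra hz0
      have hz0' : z ≠ 0 := hz0
      have hsub : spectrum ℂ (T * P) ∩ {0}ᶜ ⊆ spectrum ℂ T := by
        rintro w ⟨hw, hw0⟩
        by_contra hwT
        obtain ⟨u, hu, hu'⟩ := exists_inv_of_not_mem hwT
        exact spec_TP_subset hP hc hw0 (by rw [hu, one_mul]) (hu' P hc) (hu' T (Commute.refl T)) hw
      have hzT := cbd_local isOpen_compl_singleton hsub β ⟨hz, hz0⟩
      refine hz0' (hk z hzT ?_)
      by_contra hlt
      obtain ⟨S, hS, c1, c2⟩ := hout z (not_le.1 hlt)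
      exact spec_TP_subset hP hc hz0' hS c1 c2 (cbd_subset (hcl _) β hz)
  · rintro ⟨P, hP, hc, h1, h2⟩ hmem
    rw [cbd_succ, mem_derivedSet, accPt_iff_nhds] at hmem
    obtain ⟨y, ⟨hyU, hy⟩, hy0⟩ := hmem _ ((cbd_closed (hcl (T + P)) β).isOpen_compl.mem_nhds h1)
    have hy' := cbd_local isOpen_compl_singleton (spec_converse hP hc) β ⟨hy, hy0⟩
    rcases cbd_union (hcl _) (hcl _) β hy' with h | h
    · exact hy0 (h2 h)
    · exact hyU h
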